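/- Let n ∈ ℕ with n ≥ 2, let q ∈ (1, 2), and let β satisfy max{n/3, n − n/q} < β < n/2. Then ∫₀^∞ ( a^{β−n} | ∫₀^a r^{n/2−β} J_{n/2−1}(r) dr | )^q · a^{n−1} da = +∞. -/

import Mathlib

/-!
Put `b = n / 2`, `s = n - β`, `I(a) = ∫₀^a r^(s-b) J_{b-1}(r) dr` and `γ = (β - n) q + n - 1`. The
integrand in question is `|I(a)|^q a^γ`, and `β > n - n/q` says exactly that `γ > -1`. So it is
enough that `I` does not vanish at infinity on average, and no asymptotics of `J` are needed.

The averages used are the Gaussian means `G(ε) = ∫₀^∞ I(a) 2εa exp(-εa²) da`. Integrating the power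
series term by term expresses `G(ε)` as a confluent hypergeometric series with parameters
`s / 2 < b`, and Euler's integral turns it into
`G(ε) = C ε^(-s/2) ∫₀^1 exp(-t/(4ε)) t^(s/2-1) (1-t)^(b-s/2-1) dt` with `C > 0` (`gaussMean_eq`).
The integrand is positive and the range `t ≤ 2ε` already contributes a multiple of `ε^(s/2)`, so
`G(ε) ≥ c > 0` for small `ε` (`exists_le_gaussMean`).

Conversely, suppose `L = ∫ |I|^q a^γ` were finite (`lintegral_eq_top_of_gaussMean`). The part of
`G(ε)` over `(0, 1]` is `O(ε)` because `I` is bounded there. On `(1, ∞)` one has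
`|I| ≤ c/2 + (c/2)^(1-q) |I|^q`, and the weight satisfies `2εa exp(-εa²) ≤ 2 ε^δ a^γ` with some
`δ > 0` (`gaussWeight_le`), so this part is at most `c/2 + O(ε^δ) L`. As `ε → 0` this gives
`c ≤ c/2`, a contradiction.
-/

/-- The Bessel function of the first kind of order `ν`, defined for `t ≥ 0` by its
power series `J_ν(t) = ∑_{l=0}^∞ (−1)^l (t/2)^{ν+2l} / (l! Γ(l+ν+1))`. -/
noncomputable def besselJ (ν t : ℝ) : ℝ :=
  ∑' l : ℕ, ((-1 : ℝ) ^ l * (t / 2) ^ (ν + 2 * l)) / (l.factorial * Real.Gamma (l + ν + 1))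

open MeasureTheory

section

open Set Filter Topology

/-! ### The power series of the Bessel function and of its primitive -/

/-- The coefficients of the power series of `t ^ (1 - b) * besselJ (b - 1) t` in powers of `t ^ 2`:
`besselJ (b - 1) t = ∑ l, besselCoeff b l * t ^ (b - 1 + 2 * l)` for `t > 0`. -/
noncomputable def besselCoeff (b : ℝ) (l : ℕ) : ℝ :=
  (-1) ^ l * (1 / 2 : ℝ) ^ (b - 1) * (1 / 4) ^ l / (l.factorial * Real.Gamma (b + l))

/-- Termwise integration of a series of multiples of nonnegative functions. -/
lemma hasSum_const_mul_setIntegral {S : Set ℝ} (hS : MeasurableSet S) (c : ℕ → ℝ)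
    (g : ℕ → ℝ → ℝ) (hg : ∀ l, ∀ x ∈ S, 0 ≤ g l x) (hi : ∀ l, IntegrableOn (g l) S)
    (hs : Summable fun l => |c l| * ∫ x in S, g l x) :
    HasSum (fun l => c l * ∫ x in S, g l x) (∫ x in S, ∑' l, c l * g l x) := by
  have h := hasSum_integral_of_summable_integral_norm (μ := volume.restrict S)
    (F := fun l x => c l * g l x) (fun l => (hi l).const_mul (c l)) (by
      refine hs.congr fun l => ?_
      rw [← integral_const_mul]
      refine setIntegral_congr_fun hS fun x hx => ?_
      simp only [Real.norm_eq_abs, abs_mul, abs_of_nonneg (hg l x hx)])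
  simpa only [integral_const_mul] using h

lemma Gamma_ratio_le {a b : ℝ} (ha : 0 < a) (hab : a ≤ b) (l : ℕ) :
    Real.Gamma (a + l) / Real.Gamma (b + l) ≤ Real.Gamma a / Real.Gamma b := by
  induction l with
  | zero => simp
  | succ l ih =>
    have hb : 0 < b := ha.trans_le hab
    have ha' : 0 < a + l := by positivity
    have hb' : 0 < b + l := by positivity
    have e1 : Real.Gamma (a + (l + 1 : ℕ)) = (a + l) * Real.Gamma (a + l) := by
      rw [← Real.Gamma_add_one ha'.ne']; push_cast; ring_nf
    have e2 : Real.Gamma (b + (l + 1 : ℕ)) = (b + l) * Real.Gamma (b + l) := by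
      rw [← Real.Gamma_add_one hb'.ne']; push_cast; ring_nf
    have h1 : (a + l) / (b + l) ≤ 1 := by rw [div_le_one hb']; linarith
    have h2 : 0 ≤ Real.Gamma (a + l) / Real.Gamma (b + l) :=
      div_nonneg (Real.Gamma_pos_of_pos ha').le (Real.Gamma_pos_of_pos hb').le
    rw [e1, e2, mul_div_mul_comm]
    exact (mul_le_of_le_one_left h2 h1).trans ih

lemma abs_besselCoeff {b : ℝ} (hb : 0 < b) (l : ℕ) :
    |besselCoeff b l| =
      (1 / 2 : ℝ) ^ (b - 1) * (1 / 4) ^ l / (l.factorial * Real.Gamma (b + l)) := by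
  have hG : 0 < Real.Gamma (b + l) := Real.Gamma_pos_of_pos (by positivity)
  have : 0 ≤ (1 / 2 : ℝ) ^ (b - 1) * (1 / 4) ^ l / (l.factorial * Real.Gamma (b + l)) := by
    positivity
  rw [besselCoeff, mul_assoc, mul_div_assoc, abs_mul, abs_of_nonneg this]
  simp

lemma Gamma_le_Gamma_add_nat {b : ℝ} (hb : 1 ≤ b) (l : ℕ) :
    Real.Gamma b ≤ Real.Gamma (b + l) := by
  induction l with
  | zero => simp
  | succ l ih =>
    have hb' : 0 < b + l := by positivity
    have e2 : Real.Gamma (b + (l + 1 : ℕ)) = (b + l) * Real.Gamma (b + l) := by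
      rw [← Real.Gamma_add_one hb'.ne']; push_cast; ring_nf
    have h2 := (Real.Gamma_pos_of_pos hb').le
    rw [e2]
    refine ih.trans (le_mul_of_one_le_left h2 ?_)
    have : (0 : ℝ) ≤ l := by positivity
    linarith

lemma summable_besselCoeff_mul {b : ℝ} (hb : 1 ≤ b) (z : ℝ) (hz : 0 ≤ z) :
    Summable fun l : ℕ => |besselCoeff b l| * z ^ l := by
  have hG := Real.Gamma_pos_of_pos (show 0 < b by linarith)
  refine Summable.of_nonneg_of_le (fun l => by positivity) (fun l => ?_)
    ((Real.summable_pow_div_factorial (1 / 4 * z)).mul_left ((1 / 2 : ℝ) ^ (b - 1) / Real.Gamma b))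
  rw [abs_besselCoeff (by linarith)]
  have h1 := Gamma_le_Gamma_add_nat hb l
  calc (1 / 2 : ℝ) ^ (b - 1) * (1 / 4) ^ l / (l.factorial * Real.Gamma (b + l)) * z ^ l
      ≤ (1 / 2 : ℝ) ^ (b - 1) * (1 / 4) ^ l / (l.factorial * Real.Gamma b) * z ^ l := by gcongr
    _ = _ := by rw [mul_pow]; field_simp

lemma rpow_mul_besselJ {b s r : ℝ} (hr : 0 < r) :
    r ^ (s - b) * besselJ (b - 1) r = ∑' l : ℕ, besselCoeff b l * r ^ (s + 2 * l - 1) := by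
  rw [besselJ, ← tsum_mul_left]
  refine tsum_congr fun l => ?_
  have e1 : (r / 2) ^ (b - 1 + 2 * (l : ℝ)) = r ^ (b - 1 + 2 * (l : ℝ)) *
      ((1 / 2 : ℝ) ^ (b - 1) * (1 / 4) ^ l) := by
    rw [div_eq_mul_one_div, Real.mul_rpow hr.le (by norm_num),
      Real.rpow_add (by norm_num : (0 : ℝ) < 1 / 2), Real.rpow_mul (by norm_num),
      Real.rpow_natCast]
    norm_num
  have e2 : r ^ (s + 2 * (l : ℝ) - 1) = r ^ (s - b) * r ^ (b - 1 + 2 * (l : ℝ)) := by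
    rw [← Real.rpow_add hr]; ring_nf
  have e3 : (l : ℝ) + (b - 1) + 1 = b + l := by ring
  rw [besselCoeff, e1, e2, e3]
  ring

/-- The primitive in the theorem, for `b = n / 2` and `s = n - β`:
`besselPrim b s a = ∫₀^a r^(s-b) J_{b-1}(r) dr`. -/
noncomputable def besselPrim (b s a : ℝ) : ℝ := ∫ r in (0 : ℝ)..a, r ^ (s - b) * besselJ (b - 1) r

lemma rpow_add_two_mul {a : ℝ} (ha : 0 < a) (s : ℝ) (l : ℕ) :
    a ^ (s + 2 * l) = a ^ s * (a ^ 2) ^ l := by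
  rw [Real.rpow_add ha, Real.rpow_mul ha.le, Real.rpow_natCast]; norm_num

lemma hasSum_besselPrim {b s a : ℝ} (hb : 1 ≤ b) (hs : 0 < s) (ha : 0 < a) :
    HasSum (fun l : ℕ => besselCoeff b l * (a ^ (s + 2 * l) / (s + 2 * l))) (besselPrim b s a) := by
  have hterm : ∀ l : ℕ, ∫ r in Ioc 0 a, r ^ (s + 2 * l - 1) = a ^ (s + 2 * l) / (s + 2 * l) := by
    intro l
    have hp : 0 < s + 2 * (l : ℝ) := by positivity
    rw [← intervalIntegral.integral_of_le ha.le, integral_rpow (Or.inl (by linarith))]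
    simp [Real.zero_rpow hp.ne']
  have h := hasSum_const_mul_setIntegral (S := Ioc 0 a) measurableSet_Ioc (besselCoeff b)
    (fun l r => r ^ (s + 2 * l - 1)) (fun l x hx => Real.rpow_nonneg hx.1.le _)
    (fun l => by
      have hp : 0 < s + 2 * (l : ℝ) := by positivity
      rw [← intervalIntegrable_iff_integrableOn_Ioc_of_le ha.le]
      exact intervalIntegral.intervalIntegrable_rpow' (by linarith))
    (by
      simp only [hterm]
      refine Summable.of_nonneg_of_le (fun l => by positivity) (fun l => ?_)
        ((summable_besselCoeff_mul hb (a ^ 2) (by positivity)).mul_left (a ^ s / s))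
      rw [rpow_add_two_mul ha]
      calc |besselCoeff b l| * (a ^ s * (a ^ 2) ^ l / (s + 2 * l))
          ≤ |besselCoeff b l| * (a ^ s * (a ^ 2) ^ l / s) := by
            gcongr
            have : (0 : ℝ) ≤ l := by positivity
            linarith
        _ = _ := by ring)
  simp only [hterm] at h
  convert! h using 1
  rw [besselPrim, intervalIntegral.integral_of_le ha.le]
  exact setIntegral_congr_fun measurableSet_Ioc fun r hr => rpow_mul_besselJ hr.1

/-- Near the origin the primitive is bounded. -/
lemma exists_abs_besselPrim_le {b s : ℝ} (hb : 1 ≤ b) (hs : 0 < s) :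
    ∃ M : ℝ, 0 ≤ M ∧ ∀ a ∈ Ioc (0 : ℝ) 1, |besselPrim b s a| ≤ M := by
  have hsum := (summable_besselCoeff_mul hb 1 zero_le_one).mul_left (1 / s)
  refine ⟨∑' l : ℕ, 1 / s * (|besselCoeff b l| * 1 ^ l), tsum_nonneg fun l => by positivity,
    fun a ha => ?_⟩
  rw [← (hasSum_besselPrim hb hs ha.1).tsum_eq, ← Real.norm_eq_abs]
  refine tsum_of_norm_bounded hsum.hasSum fun l => ?_
  have hl : (0 : ℝ) ≤ l := by positivity
  have h1 : a ^ (s + 2 * (l : ℝ)) ≤ 1 := Real.rpow_le_one ha.1.le ha.2 (by positivity)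
  have h0 : 0 ≤ a ^ (s + 2 * (l : ℝ)) := Real.rpow_nonneg ha.1.le _
  rw [Real.norm_eq_abs, abs_mul, abs_of_nonneg (div_nonneg h0 (by positivity))]
  calc |besselCoeff b l| * (a ^ (s + 2 * (l : ℝ)) / (s + 2 * l))
      ≤ |besselCoeff b l| * (1 / s) := by gcongr; linarith
    _ = _ := by ring

/-! ### Gaussian means of the primitive -/

/-- The weight `2εa·exp(-εa²)`, of total mass one on `(0, ∞)`. -/
noncomputable def gaussWeight (ε a : ℝ) : ℝ := 2 * ε * (a * Real.exp (-ε * a ^ (2 : ℝ)))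

/-- The Gaussian mean of the primitive as a series in `1 / ε`, by termwise integration. Absolute
convergence uses `s / 2 < b`, which keeps `Γ(s/2 + l) / Γ(b + l)` bounded. -/
lemma hasSum_gaussMean {b s ε : ℝ} (hb : 1 ≤ b) (hs : 0 < s) (hsb : s / 2 < b) (hε : 0 < ε) :
    HasSum (fun l : ℕ => besselCoeff b l * (1 / 2 * ε ^ (-(s / 2)) * (1 / ε) ^ l *
        Real.Gamma (s / 2 + l)))
      (∫ a in Ioi 0, besselPrim b s a * gaussWeight ε a) := by
  have hterm : ∀ l : ℕ, ∫ a in Ioi 0, 2 * ε * (a ^ (s + 2 * l + 1) * Real.exp (-ε * a ^ (2 : ℝ)))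
      = (s + 2 * l) * (1 / 2 * ε ^ (-(s / 2)) * (1 / ε) ^ l * Real.Gamma (s / 2 + l)) := by
    intro l
    have hp : 0 < s + 2 * (l : ℝ) := by positivity
    rw [integral_const_mul, integral_rpow_mul_exp_neg_mul_rpow two_pos (by linarith) hε]
    have e1 : (s + 2 * (l : ℝ) + 1 + 1) / 2 = (s / 2 + l) + 1 := by ring
    have e2 : -(s + 2 * (l : ℝ) + 1 + 1) / 2 = -(s / 2) + (-(l : ℝ) + -1) := by ring
    rw [e1, e2, Real.Gamma_add_one (by positivity), Real.rpow_add hε, Real.rpow_add hε,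
      Real.rpow_neg_one, Real.rpow_neg hε.le (l : ℝ), Real.rpow_natCast, one_div_pow]
    field_simp
  have h := hasSum_const_mul_setIntegral (S := Ioi 0) measurableSet_Ioi
    (fun l => besselCoeff b l / (s + 2 * l))
    (fun l a => 2 * ε * (a ^ (s + 2 * l + 1) * Real.exp (-ε * a ^ (2 : ℝ))))
    (fun l x hx => by
      have : 0 ≤ x ^ (s + 2 * l + 1) := Real.rpow_nonneg (le_of_lt hx) _
      positivity)
    (fun l => by
      have hp : 0 < s + 2 * (l : ℝ) := by positivity
      exact (integrableOn_rpow_mul_exp_neg_mul_rpow (by linarith) two_pos hε).const_mul _)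
    (by
      simp only [hterm]
      have hG : 0 < Real.Gamma b := Real.Gamma_pos_of_pos (by linarith)
      have hGs : 0 < Real.Gamma (s / 2) := Real.Gamma_pos_of_pos (by positivity)
      refine Summable.of_nonneg_of_le (fun l => ?_) (fun l => ?_)
        ((Real.summable_pow_div_factorial (1 / 4 * (1 / ε))).mul_left
          ((1 / 2 : ℝ) ^ (b - 1) * (1 / 2 * ε ^ (-(s / 2))) *
            (Real.Gamma (s / 2) / Real.Gamma b)))
      · have : 0 < Real.Gamma (s / 2 + l) := Real.Gamma_pos_of_pos (by positivity)
        positivity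
      · have hp : 0 < s + 2 * (l : ℝ) := by positivity
        have hGl : 0 < Real.Gamma (b + l) := Real.Gamma_pos_of_pos (by positivity)
        rw [abs_div, abs_of_pos hp, abs_besselCoeff (by linarith)]
        calc _ = (1 / 2 : ℝ) ^ (b - 1) * (1 / 2 * ε ^ (-(s / 2))) *
              (Real.Gamma (s / 2 + l) / Real.Gamma (b + l)) *
              ((1 / 4 * (1 / ε)) ^ l / l.factorial) := by
              rw [mul_pow]; field_simp
          _ ≤ (1 / 2 : ℝ) ^ (b - 1) * (1 / 2 * ε ^ (-(s / 2))) *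
              (Real.Gamma (s / 2) / Real.Gamma b) *
              ((1 / 4 * (1 / ε)) ^ l / l.factorial) := by
              gcongr ?_ * ?_ * ?_
              exact Gamma_ratio_le (by positivity) hsb.le l)
  simp only [hterm] at h
  convert! h using 1
  · funext l
    have hp : 0 < s + 2 * (l : ℝ) := by positivity
    field_simp
  · refine setIntegral_congr_fun measurableSet_Ioi fun a ha => ?_
    have ha : 0 < a := ha
    rw [← (hasSum_besselPrim hb hs ha).tsum_eq, ← tsum_mul_right]
    refine tsum_congr fun l => ?_
    rw [gaussWeight, Real.rpow_add_one ha.ne']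
    ring

lemma setIntegral_beta {u v : ℝ} (hu : 0 < u) (hv : 0 < v) :
    IntegrableOn (fun t : ℝ => t ^ (u - 1) * (1 - t) ^ (v - 1)) (Ioc 0 1) ∧
    ∫ t in Ioc (0 : ℝ) 1, t ^ (u - 1) * (1 - t) ^ (v - 1) =
      Real.Gamma u * Real.Gamma v / Real.Gamma (u + v) := by
  have hcast : EqOn (fun t : ℝ => ((t ^ (u - 1) * (1 - t) ^ (v - 1) : ℝ) : ℂ))
      (fun x : ℝ => (x : ℂ) ^ ((u : ℂ) - 1) * (1 - (x : ℂ)) ^ ((v : ℂ) - 1)) (Ioc 0 1) := by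
    intro t ht
    have h1 : 0 ≤ 1 - t := by linarith [ht.2]
    simp only
    push_cast [Complex.ofReal_cpow ht.1.le, Complex.ofReal_cpow h1]
    rfl
  have hc := Complex.betaIntegral_convergent (u := u) (v := v) (by simpa) (by simpa)
  rw [intervalIntegrable_iff_integrableOn_Ioc_of_le zero_le_one] at hc
  have hc' := hc.congr_fun hcast.symm measurableSet_Ioc
  refine ⟨by simpa [IntegrableOn] using hc'.re, ?_⟩
  have hb := ProbabilityTheory.beta_eq_betaIntegralReal u v hu hv
  rw [ProbabilityTheory.beta, Complex.betaIntegral,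
    intervalIntegral.integral_of_le zero_le_one,
    ← setIntegral_congr_fun measurableSet_Ioc hcast, integral_complex_ofReal,
    Complex.ofReal_re] at hb
  exact hb.symm

/-- The Gaussian mean as Euler's integral for the confluent hypergeometric function: in the series
of `hasSum_gaussMean`, each quotient `Γ(s/2 + l) / Γ(b + l)` is a Beta integral, and the sum over
`l` under the integral is an exponential. The resulting integrand is positive. -/
lemma gaussMean_eq {b s ε : ℝ} (hb : 1 ≤ b) (hs : 0 < s) (hsb : s / 2 < b) (hε : 0 < ε) :
    ∫ a in Ioi 0, besselPrim b s a * gaussWeight ε a =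
      (1 / 2 : ℝ) ^ (b - 1) * (1 / 2 * ε ^ (-(s / 2))) / Real.Gamma (b - s / 2) *
        ∫ t in Ioc (0 : ℝ) 1,
          Real.exp (-(t / (4 * ε))) * (t ^ (s / 2 - 1) * (1 - t) ^ (b - s / 2 - 1)) := by
  have hv : 0 < b - s / 2 := by linarith
  have hGv : 0 < Real.Gamma (b - s / 2) := Real.Gamma_pos_of_pos hv
  have hbeta := fun l : ℕ => setIntegral_beta (u := s / 2 + l) (v := b - s / 2)
    (by positivity) hv
  have hsum : ∀ l : ℕ, s / 2 + (l : ℝ) + (b - s / 2) = b + l := fun l => by ring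
  simp only [hsum] at hbeta
  have h := hasSum_const_mul_setIntegral (S := Ioc 0 1) measurableSet_Ioc
    (fun l => (-(1 / (4 * ε))) ^ l / l.factorial)
    (fun l t => t ^ (s / 2 + l - 1) * (1 - t) ^ (b - s / 2 - 1))
    (fun l x hx => mul_nonneg (Real.rpow_nonneg hx.1.le _)
      (Real.rpow_nonneg (by linarith [hx.2]) _))
    (fun l => (hbeta l).1)
    (by
      simp only [(hbeta _).2]
      refine Summable.of_nonneg_of_le (fun l => ?_) (fun l => ?_)
        ((Real.summable_pow_div_factorial (1 / (4 * ε))).mul_left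
          (Real.Gamma (s / 2) / Real.Gamma b * Real.Gamma (b - s / 2)))
      · have h1 : 0 < Real.Gamma (s / 2 + l) := Real.Gamma_pos_of_pos (by positivity)
        have h2 : 0 < Real.Gamma (b + l) := Real.Gamma_pos_of_pos (by positivity)
        positivity
      · have hq := Gamma_ratio_le (show 0 < s / 2 by positivity) hsb.le l
        rw [abs_div, abs_pow, abs_neg, abs_of_pos (show 0 < 1 / (4 * ε) by positivity),
          abs_of_pos (show (0 : ℝ) < l.factorial by positivity)]
        calc _ = Real.Gamma (s / 2 + l) / Real.Gamma (b + l) * Real.Gamma (b - s / 2) *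
              ((1 / (4 * ε)) ^ l / l.factorial) := by ring
          _ ≤ _ := by gcongr)
  simp only [(hbeta _).2] at h
  have h2 := (h.mul_left
    ((1 / 2 : ℝ) ^ (b - 1) * (1 / 2 * ε ^ (-(s / 2))) / Real.Gamma (b - s / 2))).tsum_eq
  rw [← (hasSum_gaussMean hb hs hsb hε).tsum_eq]
  convert! h2 using 1
  · refine tsum_congr fun l => ?_
    have e : (-(1 / (4 * ε))) ^ l = (-1) ^ l * (1 / 4) ^ l * (1 / ε) ^ l := by
      rw [← mul_pow, ← mul_pow]; congr 1; field_simp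
    rw [besselCoeff, e]
    calc _ = (1 / 2 : ℝ) ^ (b - 1) * (1 / 2 * ε ^ (-(s / 2))) *
          ((-1) ^ l * (1 / 4) ^ l * (1 / ε) ^ l / l.factorial *
            (Real.Gamma (s / 2 + l) / Real.Gamma (b + l))) *
          (Real.Gamma (b - s / 2) / Real.Gamma (b - s / 2)) := by
          rw [div_self hGv.ne']; ring
      _ = _ := by ring
  · congr 1
    refine setIntegral_congr_fun measurableSet_Ioc fun t ht => ?_
    rw [Real.exp_eq_exp_ℝ, NormedSpace.exp_eq_tsum_div, ← tsum_mul_right]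
    refine tsum_congr fun l => ?_
    have e : t ^ (s / 2 + (l : ℝ) - 1) = t ^ (s / 2 - 1) * t ^ l := by
      rw [← Real.rpow_natCast, ← Real.rpow_add ht.1]; ring_nf
    have e2 : (-(t / (4 * ε))) ^ l = t ^ l * (-(1 / (4 * ε))) ^ l := by
      rw [← mul_pow]; ring
    rw [e, e2]
    ring

/-- The Gaussian means of the primitive stay away from zero: in Euler's integral the range
`0 < t ≤ 2ε` alone contributes a fixed multiple of `ε ^ (s / 2)`. -/
lemma exists_le_gaussMean {b s : ℝ} (hb : 1 ≤ b) (hs : 0 < s) (hsb : s / 2 < b) :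
    ∃ c : ℝ, 0 < c ∧ ∀ ε ∈ Ioc (0 : ℝ) (1 / 4),
      c ≤ ∫ a in Ioi 0, besselPrim b s a * gaussWeight ε a := by
  have hv : 0 < b - s / 2 := by linarith
  have hGv : 0 < Real.Gamma (b - s / 2) := Real.Gamma_pos_of_pos hv
  refine ⟨(1 / 2 : ℝ) ^ (b - 1) * (1 / 2) / Real.Gamma (b - s / 2) *
    (Real.exp (-1) * (1 / 2) ^ (b - s / 2) * (2 ^ (s / 2) / (s / 2))), by positivity, ?_⟩
  rintro ε ⟨hε, hε4⟩
  rw [gaussMean_eq hb hs hsb hε]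
  have hbeta := (setIntegral_beta (show 0 < s / 2 by positivity) hv).1
  have hnn : ∀ t ∈ Ioc (0 : ℝ) 1, 0 ≤ t ^ (s / 2 - 1) * (1 - t) ^ (b - s / 2 - 1) := fun t ht =>
    mul_nonneg (Real.rpow_nonneg ht.1.le _) (Real.rpow_nonneg (by linarith [ht.2]) _)
  have hI : IntegrableOn (fun t : ℝ =>
      Real.exp (-(t / (4 * ε))) * (t ^ (s / 2 - 1) * (1 - t) ^ (b - s / 2 - 1))) (Ioc 0 1) := by
    refine Integrable.mono' hbeta (by fun_prop) ?_
    refine (ae_restrict_iff' measurableSet_Ioc).2 (ae_of_all _ fun t ht => ?_)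
    rw [Real.norm_eq_abs, abs_of_nonneg (mul_nonneg (Real.exp_pos _).le (hnn t ht))]
    refine mul_le_of_le_one_left (hnn t ht) (Real.exp_le_one_iff.2 ?_)
    have := ht.1
    rw [neg_nonpos]; positivity
  have hsub : Ioc (0 : ℝ) (2 * ε) ⊆ Ioc 0 1 := Ioc_subset_Ioc_right (by linarith)
  have hlow : Real.exp (-1) * (1 / 2) ^ (b - s / 2) * ((2 * ε) ^ (s / 2) / (s / 2)) ≤
      ∫ t in Ioc (0 : ℝ) 1,
        Real.exp (-(t / (4 * ε))) * (t ^ (s / 2 - 1) * (1 - t) ^ (b - s / 2 - 1)) := by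
    have hpow : ∫ t in Ioc 0 (2 * ε), t ^ (s / 2 - 1) = (2 * ε) ^ (s / 2) / (s / 2) := by
      rw [← intervalIntegral.integral_of_le (by positivity),
        integral_rpow (Or.inl (by linarith))]
      simp [Real.zero_rpow (show s / 2 ≠ 0 by positivity)]
    rw [← hpow, ← integral_const_mul]
    refine le_trans ?_ (setIntegral_mono_set hI
      ((ae_restrict_iff' measurableSet_Ioc).2 (ae_of_all _ fun t ht =>
        mul_nonneg (Real.exp_pos _).le (hnn t ht))) hsub.eventuallyLE)
    refine setIntegral_mono_on ?_ (hI.mono_set hsub) measurableSet_Ioc fun t ht => ?_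
    · have : IntegrableOn (fun t : ℝ => t ^ (s / 2 - 1)) (Ioc 0 (2 * ε)) := by
        rw [← intervalIntegrable_iff_integrableOn_Ioc_of_le (by positivity)]
        exact intervalIntegral.intervalIntegrable_rpow' (by linarith)
      exact this.const_mul _
    · have ht0 := ht.1
      have ht1 : t ≤ 1 / 2 := by linarith [ht.2]
      have h1 : Real.exp (-1) ≤ Real.exp (-(t / (4 * ε))) := by
        refine Real.exp_le_exp.2 (neg_le_neg ?_)
        rw [div_le_one (by positivity)]
        linarith [ht.2]
      have h2 : (1 / 2 : ℝ) ^ (b - s / 2) ≤ (1 - t) ^ (b - s / 2 - 1) :=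
        (Real.rpow_le_rpow (by norm_num) (by linarith) hv.le).trans
          (Real.rpow_le_rpow_of_exponent_ge (by linarith) (by linarith) (by linarith))
      have h3 : 0 ≤ t ^ (s / 2 - 1) := Real.rpow_nonneg ht0.le _
      calc Real.exp (-1) * (1 / 2) ^ (b - s / 2) * t ^ (s / 2 - 1)
          ≤ Real.exp (-(t / (4 * ε))) * (1 - t) ^ (b - s / 2 - 1) * t ^ (s / 2 - 1) := by gcongr
        _ = _ := by ring
  calc _ = (1 / 2 : ℝ) ^ (b - 1) * (1 / 2 * ε ^ (-(s / 2))) / Real.Gamma (b - s / 2) *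
        (Real.exp (-1) * (1 / 2) ^ (b - s / 2) * ((2 * ε) ^ (s / 2) / (s / 2))) := by
        rw [Real.mul_rpow (by norm_num) hε.le, Real.rpow_neg hε.le]
        have : ε ^ (s / 2) ≠ 0 := by positivity
        field_simp
    _ ≤ _ := by gcongr

lemma gaussWeight_nonneg {ε a : ℝ} (hε : 0 < ε) (ha : 0 ≤ a) : 0 ≤ gaussWeight ε a := by
  unfold gaussWeight; positivity

lemma lintegral_gaussWeight {ε : ℝ} (hε : 0 < ε) :
    ∫⁻ a in Ioi 0, ENNReal.ofReal (gaussWeight ε a) = 1 := by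
  have hterm := (integrableOn_rpow_mul_exp_neg_mul_rpow (s := 1) (by norm_num) two_pos hε).const_mul
    (2 * ε)
  have hval := integral_rpow_mul_exp_neg_mul_rpow (q := 1) two_pos (by norm_num) hε
  simp only [Real.rpow_one] at hterm hval
  rw [← ofReal_integral_eq_lintegral_ofReal]
  · simp only [gaussWeight]
    rw [integral_const_mul, hval]
    norm_num [Real.rpow_neg_one]
    field_simp
  · exact hterm
  · exact (ae_restrict_iff' measurableSet_Ioi).2
      (ae_of_all _ fun a ha => gaussWeight_nonneg hε (le_of_lt ha))

lemma rpow_mul_exp_neg_le_one {y θ : ℝ} (hy : 0 ≤ y) (h0 : 0 ≤ θ) (h1 : θ ≤ 1) :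
    y ^ θ * Real.exp (-y) ≤ 1 := by
  have hle : y ^ θ ≤ Real.exp y := by
    rcases le_total y 1 with h | h
    · exact (Real.rpow_le_one hy h h0).trans (Real.one_le_exp hy)
    · calc y ^ θ ≤ y ^ (1 : ℝ) := Real.rpow_le_rpow_of_exponent_le h h1
        _ = y := Real.rpow_one y
        _ ≤ Real.exp y := by linarith [Real.add_one_le_exp y]
  calc y ^ θ * Real.exp (-y) ≤ Real.exp y * Real.exp (-y) := by gcongr
    _ = 1 := by rw [← Real.exp_add]; simp

/-- On `[1, ∞)` the weight is small compared to `a ^ γ`, uniformly in `a`, when `γ > -1`. -/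
lemma gaussWeight_le {γ ε a : ℝ} (hγ : -1 < γ) (hε : 0 < ε) (ha : 1 ≤ a) :
    gaussWeight ε a ≤ 2 * ε ^ (min 1 ((γ + 1) / 2)) * a ^ γ := by
  set δ := min 1 ((γ + 1) / 2) with hδ
  have hδ1 : δ ≤ 1 := min_le_left _ _
  have hδ2 : δ ≤ (γ + 1) / 2 := min_le_right _ _
  have hδ0 : 0 < δ := lt_min one_pos (by linarith)
  have ha0 : 0 < a := by linarith
  have h1 := rpow_mul_exp_neg_le_one (y := ε * a ^ (2 : ℝ)) (θ := 1 - δ) (by positivity)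
    (by linarith) (by linarith)
  have h2 : a ^ (2 * δ - 1) ≤ a ^ γ := Real.rpow_le_rpow_of_exponent_le ha (by linarith)
  have e : ε * a = ε ^ δ * (ε * a ^ (2 : ℝ)) ^ (1 - δ) * a ^ (2 * δ - 1) := by
    rw [Real.mul_rpow hε.le (by positivity), ← Real.rpow_mul ha0.le]
    calc ε * a = ε ^ (δ + (1 - δ)) * a ^ (2 * (1 - δ) + (2 * δ - 1)) := by
          ring_nf; simp
      _ = _ := by rw [Real.rpow_add hε, Real.rpow_add ha0]; ring
  calc gaussWeight ε a = 2 * (ε * a) * Real.exp (-(ε * a ^ (2 : ℝ))) := by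
        rw [gaussWeight, neg_mul]; ring
    _ = 2 * ε ^ δ * ((ε * a ^ (2 : ℝ)) ^ (1 - δ) * Real.exp (-(ε * a ^ (2 : ℝ)))) *
          a ^ (2 * δ - 1) := by rw [e]; ring
    _ ≤ 2 * ε ^ δ * 1 * a ^ γ := by gcongr
    _ = _ := by ring

/-! ### Divergence of the moment -/

/-- If the Gaussian means of `f` stay away from zero and `f` is bounded near the origin, then
for `q > 1` it has infinite weighted `q`-th moment for every weight `a ^ γ` with `γ > -1`. -/
lemma lintegral_eq_top_of_gaussMean {f : ℝ → ℝ} {M c q γ : ℝ} (hM : 0 ≤ M)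
    (hf : ∀ a ∈ Ioc (0 : ℝ) 1, |f a| ≤ M) (hc : 0 < c)
    (hmean : ∀ ε ∈ Ioc (0 : ℝ) (1 / 4), c ≤ ∫ a in Ioi 0, f a * gaussWeight ε a)
    (hq : 1 < q) (hγ : -1 < γ) :
    ∫⁻ a in Ioi (0 : ℝ), ENNReal.ofReal (|f a| ^ q * a ^ γ) = ⊤ := by
  by_contra hL
  set L := ∫⁻ a in Ioi (0 : ℝ), ENNReal.ofReal (|f a| ^ q * a ^ γ) with hLdef
  set δ := min 1 ((γ + 1) / 2) with hδ
  have hδ0 : 0 < δ := lt_min one_pos (by linarith)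
  have key : ∀ ε ∈ Ioc (0 : ℝ) (1 / 4),
      c ≤ M * (2 * ε) + c / 2 + (c / 2) ^ (1 - q) * (2 * ε ^ δ) * L.toReal := by
    intro ε hεm
    have hε := hεm.1
    have h1 : ENNReal.ofReal c ≤ ∫⁻ a in Ioi 0, ENNReal.ofReal (|f a| * gaussWeight ε a) := by
      refine (ENNReal.ofReal_le_ofReal ((hmean ε hεm).trans (le_abs_self _))).trans ?_
      rw [← Real.enorm_eq_ofReal_abs]
      refine (enorm_integral_le_lintegral_enorm _).trans ?_
      refine setLIntegral_mono' measurableSet_Ioi fun a ha => ?_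
      rw [Real.enorm_eq_ofReal_abs, abs_mul, abs_of_nonneg (gaussWeight_nonneg hε (le_of_lt ha))]
    have h2 : ∫⁻ a in Ioc 0 1, ENNReal.ofReal (|f a| * gaussWeight ε a)
        ≤ ENNReal.ofReal (M * (2 * ε)) := by
      calc _ ≤ ∫⁻ a in Ioc (0 : ℝ) 1, ENNReal.ofReal (M * (2 * ε)) := by
            refine setLIntegral_mono' measurableSet_Ioc fun a ha => ENNReal.ofReal_le_ofReal ?_
            have hw : gaussWeight ε a ≤ 2 * ε := by
              have h0 := ha.1
              have : Real.exp (-ε * a ^ (2 : ℝ)) ≤ 1 :=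
                Real.exp_le_one_iff.2 (by rw [neg_mul, neg_nonpos]; positivity)
              exact mul_le_of_le_one_right (by positivity)
                (mul_le_one₀ ha.2 (Real.exp_pos _).le this)
            exact mul_le_mul (hf a ha) hw (gaussWeight_nonneg hε ha.1.le) hM
        _ = _ := by simp
    have h3 : ∫⁻ a in Ioi 1, ENNReal.ofReal (|f a| * gaussWeight ε a)
        ≤ ENNReal.ofReal (c / 2) + ENNReal.ofReal ((c / 2) ^ (1 - q) * (2 * ε ^ δ)) * L := by
      have hsub : Ioi (1 : ℝ) ⊆ Ioi 0 := Ioi_subset_Ioi zero_le_one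
      calc _ ≤ ∫⁻ a in Ioi (1 : ℝ), (ENNReal.ofReal (c / 2) * ENNReal.ofReal (gaussWeight ε a) +
              ENNReal.ofReal ((c / 2) ^ (1 - q) * (2 * ε ^ δ)) *
                ENNReal.ofReal (|f a| ^ q * a ^ γ)) := by
            refine setLIntegral_mono' measurableSet_Ioi fun a ha => ?_
            have ha : 1 < a := ha
            have hw := gaussWeight_nonneg hε (zero_le_one.trans ha.le)
            have hfq : 0 ≤ |f a| ^ q := by positivity
            have hK : 0 ≤ (c / 2) ^ (1 - q) * (2 * ε ^ δ) := by positivity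
            have hag : 0 ≤ |f a| ^ q * a ^ γ := by positivity
            rw [← ENNReal.ofReal_mul (by positivity), ← ENNReal.ofReal_mul hK,
              ← ENNReal.ofReal_add (by positivity) (by positivity)]
            refine ENNReal.ofReal_le_ofReal ?_
            -- `x ≤ η + η ^ (1 - q) * x ^ q` for `x ≥ 0`, `η > 0`, used with `η = c / 2`
            have hx : |f a| ≤ c / 2 + (c / 2) ^ (1 - q) * |f a| ^ q := by
              rcases le_total |f a| (c / 2) with h | h
              · have : 0 ≤ (c / 2) ^ (1 - q) * |f a| ^ q := by positivity
                linarith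
              · have h0 : 0 < |f a| := by linarith
                have e : |f a| = |f a| ^ (1 - q) * |f a| ^ q := by
                  rw [← Real.rpow_add h0]; simp
                have : |f a| ^ (1 - q) ≤ (c / 2) ^ (1 - q) :=
                  Real.rpow_le_rpow_of_nonpos (by positivity) h (by linarith)
                nlinarith [mul_le_mul_of_nonneg_right this hfq]
            calc |f a| * gaussWeight ε a
                ≤ (c / 2 + (c / 2) ^ (1 - q) * |f a| ^ q) * gaussWeight ε a := by gcongr
              _ = c / 2 * gaussWeight ε a +
                  (c / 2) ^ (1 - q) * |f a| ^ q * gaussWeight ε a := by ring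
              _ ≤ c / 2 * gaussWeight ε a +
                  (c / 2) ^ (1 - q) * |f a| ^ q * (2 * ε ^ δ * a ^ γ) := by
                  gcongr
                  exact gaussWeight_le hγ hε ha.le
              _ = _ := by ring
        _ = ENNReal.ofReal (c / 2) * (∫⁻ a in Ioi (1 : ℝ), ENNReal.ofReal (gaussWeight ε a)) +
              ENNReal.ofReal ((c / 2) ^ (1 - q) * (2 * ε ^ δ)) *
                ∫⁻ a in Ioi (1 : ℝ), ENNReal.ofReal (|f a| ^ q * a ^ γ) := by
            rw [lintegral_add_left (by unfold gaussWeight; fun_prop),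
              lintegral_const_mul' _ _ ENNReal.ofReal_ne_top,
              lintegral_const_mul' _ _ ENNReal.ofReal_ne_top]
        _ ≤ ENNReal.ofReal (c / 2) * 1 +
              ENNReal.ofReal ((c / 2) ^ (1 - q) * (2 * ε ^ δ)) * L := by
            gcongr
            · rw [← lintegral_gaussWeight hε]
              exact lintegral_mono_set hsub
            · exact lintegral_mono_set hsub
        _ = _ := by rw [mul_one]
    have h4 : ENNReal.ofReal c ≤ ENNReal.ofReal
        (M * (2 * ε) + c / 2 + (c / 2) ^ (1 - q) * (2 * ε ^ δ) * L.toReal) := by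
      rw [ENNReal.ofReal_add (by positivity) (by positivity),
        ENNReal.ofReal_add (by positivity) (by positivity),
        ENNReal.ofReal_mul (p := (c / 2) ^ (1 - q) * (2 * ε ^ δ)) (by positivity),
        ENNReal.ofReal_toReal hL, add_assoc]
      refine h1.trans ?_
      rw [← Ioc_union_Ioi_eq_Ioi (zero_le_one' ℝ)]
      exact (lintegral_union_le _ _ _).trans (add_le_add h2 h3)
    exact (ENNReal.ofReal_le_ofReal_iff (by positivity)).1 h4
  have hlim : Tendsto (fun ε : ℝ =>
      M * (2 * ε) + c / 2 + (c / 2) ^ (1 - q) * (2 * ε ^ δ) * L.toReal) (𝓝[>] 0)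
      (𝓝 (M * (2 * 0) + c / 2 + (c / 2) ^ (1 - q) * (2 * (0 : ℝ) ^ δ) * L.toReal)) := by
    refine Tendsto.mono_left (Continuous.tendsto ?_ 0) nhdsWithin_le_nhds
    have := Real.continuous_rpow_const hδ0.le
    fun_prop
  have hfin := ge_of_tendsto hlim
    (mem_of_superset (Ioc_mem_nhdsGT (show (0 : ℝ) < 1 / 4 by norm_num)) key)
  rw [Real.zero_rpow hδ0.ne'] at hfin
  linarith

end

/-- For `n ≥ 2`, `q ∈ (1,2)` and `max{n/3, n − n/q} < β < n/2`,
`∫₀^∞ (a^{β−n} |∫₀^a r^{n/2−β} J_{n/2−1}(r) dr|)^q a^{n−1} da = +∞`. -/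
theorem besselJ_integral_power_not_integrable (n : ℕ) (hn : 2 ≤ n) (q β : ℝ)
    (hq1 : 1 < q) (hq2 : q < 2)
    (hβ1 : max ((n : ℝ) / 3) ((n : ℝ) - (n : ℝ) / q) < β) (hβ2 : β < (n : ℝ) / 2) :
    ∫⁻ a in Set.Ioi (0 : ℝ),
        ENNReal.ofReal
          ((a ^ (β - n)
              * |∫ r in (0 : ℝ)..a, r ^ ((n : ℝ) / 2 - β) * besselJ ((n : ℝ) / 2 - 1) r|) ^ q
            * a ^ (n - 1)) = ⊤ := by
  have hn' : (2 : ℝ) ≤ n := by exact_mod_cast hn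
  obtain ⟨hβ3, hβq⟩ := max_lt_iff.1 hβ1
  have hb : 1 ≤ (n : ℝ) / 2 := by linarith
  have hs : 0 < (n : ℝ) - β := by linarith
  have hsb : ((n : ℝ) - β) / 2 < n / 2 := by linarith
  have hγ : -1 < (β - n) * q + (n - 1) := by
    have : (n : ℝ) / q * q = n := div_mul_cancel₀ _ (by linarith)
    nlinarith
  obtain ⟨M, hM, hf⟩ := exists_abs_besselPrim_le hb hs
  obtain ⟨c, hc, hmean⟩ := exists_le_gaussMean hb hs hsb
  rw [← lintegral_eq_top_of_gaussMean hM hf hc hmean hq1 hγ]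
  refine setLIntegral_congr_fun measurableSet_Ioi fun a ha => ?_
  have ha : 0 < a := ha
  have e : (n : ℝ) - β - n / 2 = n / 2 - β := by ring
  have hcast : a ^ (n - 1) = a ^ ((n : ℝ) - 1) := by
    rw [← Real.rpow_natCast, Nat.cast_sub (by omega), Nat.cast_one]
  simp only [besselPrim, e]
  rw [Real.mul_rpow (by positivity) (abs_nonneg _), ← Real.rpow_mul ha.le, hcast,
    Real.rpow_add ha]
  ring_nf
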